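/- Let K be a compact independent subset of ℝ, L = K ∪ (−K), and L_n the n-fold sumset of L. Then the Lebesgue measure of L_n is zero for every n ≥ 1. -/

import Mathlib

open MeasureTheory Set

def IsIndependentSet (K : Set ℝ) : Prop :=
  ∀ (k : ℕ) (y : Fin k → ℝ), Function.Injective y → (∀ i, y i ∈ K) →
    ∀ α : Fin k → ℤ, (∑ i, (α i : ℝ) * y i) = 0 → ∀ i, α i = 0

def sumset (L : Set ℝ) (n : ℕ) : Set ℝ :=
  {x | ∃ f : Fin n → ℝ, (∀ i, f i ∈ L) ∧ x = ∑ i, f i}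

/-! If a measurable subset `A` of `Lₙ` had positive measure, then by Steinhaus `A - A` would be a
neighbourhood of `0`, so it would contain `x` and `(2n + 1) x` for some `x ≠ 0`. But elements of
`A - A ⊆ L₂ₙ` are integer combinations of `K` with coefficients in `[-2n, 2n]`. The coefficients of
`(2n + 1) x` are unique by independence and divisible by `2n + 1`, so they all vanish and `x = 0`. -/

section Pointwise

open Filter Topology
open scoped Pointwise

section CoeffBox

variable {ι G : Type*} [AddCommGroup G] {v : ι → G} {m n : ℕ} {x y : G}

/-- The integer combinations of the family `v` whose coefficients lie in `[-n, n]`: a set containing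
the `n`-fold sumset of `±v` in which divisibility arguments on coefficients can be carried out. -/
def coeffBox (v : ι → G) (n : ℕ) : Set G :=
  Finsupp.linearCombination ℤ v '' {c | ∀ i, |c i| ≤ n}

lemma zero_mem_coeffBox : 0 ∈ coeffBox v n :=
  ⟨0, fun _ => by simp, map_zero _⟩

lemma mem_coeffBox_one (i : ι) : v i ∈ coeffBox v 1 := by
  classical
  refine ⟨Finsupp.single i 1, fun j => ?_, by simp⟩
  rw [Finsupp.single_apply]
  split_ifs <;> simp

lemma neg_mem_coeffBox (hx : x ∈ coeffBox v n) : -x ∈ coeffBox v n := by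
  obtain ⟨c, hc, rfl⟩ := hx
  exact ⟨-c, fun i => by simpa using hc i, map_neg _ c⟩

lemma add_mem_coeffBox (hx : x ∈ coeffBox v m) (hy : y ∈ coeffBox v n) :
    x + y ∈ coeffBox v (m + n) := by
  obtain ⟨c, hc, rfl⟩ := hx
  obtain ⟨d, hd, rfl⟩ := hy
  refine ⟨c + d, fun i => ?_, map_add _ c d⟩
  calc |c i + d i| ≤ |c i| + |d i| := abs_add_le _ _
    _ ≤ (m + n : ℕ) := by push_cast; exact add_le_add (hc i) (hd i)

lemma sub_coeffBox_subset : coeffBox v m - coeffBox v n ⊆ coeffBox v (m + n) := by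
  rintro _ ⟨x, hx, y, hy, rfl⟩
  simpa only [sub_eq_add_neg] using add_mem_coeffBox hx (neg_mem_coeffBox hy)

lemma sum_range_union_neg_subset_coeffBox (v : ι → G) (n : ℕ) :
    ∑ _ : Fin n, (range v ∪ -range v) ⊆ coeffBox v n := by
  induction n with
  | zero => simpa using zero_mem_coeffBox
  | succ n ih =>
    rw [Fin.sum_univ_castSucc]
    rintro _ ⟨x, hx, y, ⟨i, rfl⟩ | ⟨i, hi⟩, rfl⟩
    · exact add_mem_coeffBox (ih hx) (mem_coeffBox_one i)
    · refine add_mem_coeffBox (ih hx) ?_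
      simpa only [hi, neg_neg] using neg_mem_coeffBox (mem_coeffBox_one (v := v) i)

lemma eq_zero_of_succ_nsmul_mem_coeffBox (hv : LinearIndependent ℤ v) (hx : x ∈ coeffBox v m)
    (hnx : (n + 1) • x ∈ coeffBox v n) : x = 0 := by
  obtain ⟨c, -, rfl⟩ := hx
  obtain ⟨d, hd, hdc⟩ := hnx
  obtain rfl : d = (n + 1) • c := hv (hdc.trans (map_nsmul _ _ c).symm)
  suffices c = 0 by rw [this, map_zero]
  ext i
  have hdvd : ((n + 1 : ℕ) : ℤ) ∣ ((n + 1) • c) i := ⟨c i, by simp⟩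
  have hzero : ((n + 1) • c) i = 0 :=
    Int.eq_zero_of_abs_lt_dvd hdvd ((hd i).trans_lt (by simp))
  simpa [Nat.cast_add_one_ne_zero] using hzero

end CoeffBox

lemma exists_ne_zero_mem_nsmul_mem_of_mem_nhds_zero {G : Type*} [AddMonoid G]
    [TopologicalSpace G] [ContinuousAdd G] [(𝓝[≠] (0 : G)).NeBot] {U : Set G} (hU : U ∈ 𝓝 0)
    (m : ℕ) : ∃ x ≠ 0, x ∈ U ∧ m • x ∈ U := by
  have hmU : ∀ᶠ x in 𝓝 (0 : G), m • x ∈ U :=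
    (continuous_nsmul m).continuousAt.eventually_mem (by simpa using hU)
  have hU' : ∀ᶠ x in 𝓝[≠] (0 : G), x ∈ U ∧ m • x ∈ U :=
    ((eventually_mem_set.2 hU).and hmU).filter_mono nhdsWithin_le_nhds
  exact (eventually_mem_nhdsWithin.and hU').exists

lemma sub_mem_nhds_zero_of_measure_ne_zero {G : Type*} [AddGroup G] [TopologicalSpace G]
    [IsTopologicalAddGroup G] [LocallyCompactSpace G] [MeasurableSpace G] [BorelSpace G]
    {μ : Measure G} [μ.IsAddHaarMeasure] [μ.InnerRegular] {A : Set G}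
    (hA : NullMeasurableSet A μ) (hpos : μ A ≠ 0) : A - A ∈ 𝓝 0 := by
  obtain ⟨B, hBA, hB, hBA_ae⟩ := hA.exists_measurable_subset_ae_eq
  have hBpos : 0 < μ B := by rwa [measure_congr hBA_ae, pos_iff_ne_zero]
  exact mem_of_superset (Measure.sub_mem_nhds_zero_of_addHaar_pos μ B hB hBpos)
    (sub_subset_sub hBA hBA)

lemma isCompact_fintype_sum {ι M : Type*} [Fintype ι] [AddCommMonoid M] [TopologicalSpace M]
    [ContinuousAdd M] {S : ι → Set M} (hS : ∀ i, IsCompact (S i)) : IsCompact (∑ i, S i) := by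
  rw [← image_fintype_sum_pi]
  exact (isCompact_univ_pi hS).image (by fun_prop)

lemma sumset_eq_sum (L : Set ℝ) (n : ℕ) : sumset L n = ∑ _ : Fin n, L := by
  ext x
  simp only [sumset, mem_ofPred_eq, mem_fintype_sum, exists_prop, eq_comm]

lemma IsIndependentSet.linearIndepOn {K : Set ℝ} (hK : IsIndependentSet K) :
    LinearIndepOn ℤ id K := by
  refine linearIndepOn_iff_linearIndepOn_finset.2 fun t ht => ?_
  let e := t.equivFin.symm
  refine (linearIndependent_equiv e).1 (Fintype.linearIndependent_iff.2 fun α hα => ?_)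
  exact hK _ (fun j => (e j : ℝ)) (Subtype.val_injective.comp e.injective)
    (fun j => ht (e j).2) α (by simpa using hα)

theorem stmt1_general {G : Type*} [AddCommGroup G] [TopologicalSpace G]
    [IsTopologicalAddGroup G] [LocallyCompactSpace G] [(𝓝[≠] (0 : G)).NeBot] [MeasurableSpace G]
    [BorelSpace G] {μ : Measure G} [μ.IsAddHaarMeasure] [μ.InnerRegular] {K A : Set G} {n : ℕ}
    (hK : LinearIndepOn ℤ id K) (hA : NullMeasurableSet A μ)
    (hAK : A ⊆ ∑ _ : Fin n, (K ∪ -K)) : μ A = 0 := by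
  by_contra hpos
  have hbox := sum_range_union_neg_subset_coeffBox ((↑) : K → G) n
  rw [Subtype.range_coe] at hbox
  have hAA : A - A ⊆ coeffBox ((↑) : K → G) (n + n) :=
    (sub_subset_sub (hAK.trans hbox) (hAK.trans hbox)).trans sub_coeffBox_subset
  obtain ⟨x, hx0, hx, hnx⟩ := exists_ne_zero_mem_nsmul_mem_of_mem_nhds_zero
    (sub_mem_nhds_zero_of_measure_ne_zero hA hpos) (n + n + 1)
  exact hx0 (eq_zero_of_succ_nsmul_mem_coeffBox hK (hAA hx) (hAA hnx))

end Pointwise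

theorem stmt1 (K : Set ℝ) (hK : IsCompact K) (hInd : IsIndependentSet K)
    (L : Set ℝ) (hL : L = K ∪ (-K)) (n : ℕ) (hn : 1 ≤ n) :
    volume (sumset L n) = 0 := by
  rw [hL, sumset_eq_sum]
  exact stmt1_general hInd.linearIndepOn
    (isCompact_fintype_sum fun _ => hK.union hK.neg).measurableSet.nullMeasurableSet subset_rfl
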